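/- Let k ≥ 1 be an integer. Then (s − k)·Σ_{m∈ℤ^k} (1 + ‖m‖²)^(−s/2) tends to k·π^(k/2)/Γ(k/2 + 1) as the real parameter s tends to k from the right. (The constant k·π^(k/2)/Γ(k/2+1) is the surface volume Vol_{k−1}(S^{k−1}) of the unit sphere in ℝ^k.) -/

import Mathlib

open Filter

section aux
variable {α : Type*} (x : α → ℝ)

lemma aux_real {x s : ℝ} (hx : 1 ≤ x) (hs : 1 < s) (hs2 : s < 2) :
    |x ^ (-s) - ((⌈x⌉₊ : ℕ) : ℝ) ^ (-s)| ≤ 2 * x ^ (-2 : ℝ) := by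
  set N : ℝ := ((⌈x⌉₊ : ℕ) : ℝ) with hN
  have h0 : 0 < x := by linarith
  have h1 : x ≤ N := Nat.le_ceil x
  have h2 : N < x + 1 := Nat.ceil_lt_add_one h0.le
  have hN0 : 0 < N := by linarith
  have h3 : N ^ (-s) ≤ x ^ (-s) := Real.rpow_le_rpow_of_nonpos h0 h1 (by linarith)
  rw [abs_of_nonneg (by linarith)]
  have hb := one_add_mul_self_le_rpow_one_add (s := x / N - 1)
    (by have : 0 < x / N := by positivity
        linarith) hs.le
  rw [add_sub_cancel, Real.div_rpow h0.le hN0.le] at hb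
  have e : N ^ (-s) = x ^ (-s) * (x ^ s / N ^ s) := by
    rw [Real.rpow_neg h0.le, Real.rpow_neg hN0.le]
    have := Real.rpow_pos_of_pos h0 s
    field_simp
  have h4 : 1 - x / N ≤ 1 / x := by
    rw [one_sub_div hN0.ne', div_le_div_iff₀ hN0 h0]
    nlinarith
  have hxs : 0 < x ^ (-s) := Real.rpow_pos_of_pos h0 _
  calc x ^ (-s) - N ^ (-s) = x ^ (-s) * (1 - x ^ s / N ^ s) := by rw [e]; ring
    _ ≤ x ^ (-s) * (2 * (1 / x)) := by
        gcongr
        have : 0 ≤ 1 / x := by positivity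
        nlinarith
    _ = 2 * x ^ (-s - 1) := by rw [Real.rpow_sub_one h0.ne']; ring
    _ ≤ 2 * x ^ (-2 : ℝ) := by
        gcongr
        linarith

lemma aux_residue {l : ℝ} (hx : ∀ i, 1 ≤ x i) (hfin : ∀ n : ℕ, {i | x i ≤ n}.Finite)
    (hlim : Tendsto (fun n : ℕ => ({i | x i ≤ n}.ncard : ℝ) / n) atTop (nhds l)) :
    Tendsto (fun s : ℝ => (s - 1) * ∑' i, x i ^ (-s)) (nhdsWithin 1 (Set.Ioi 1)) (nhds l) := by
  classical
  set N : α → ℕ := fun i => ⌈x i⌉₊ with hNdef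
  have hN1 : ∀ i, 1 ≤ N i := fun i => Nat.one_le_ceil_iff.2 (by linarith [hx i])
  have hNle : ∀ i (n : ℕ), N i ≤ n ↔ x i ≤ n := fun i n => Nat.ceil_le
  have hff : ∀ n, {i | N i = n}.Finite := fun n =>
    (hfin n).subset (fun i (hi : N i = n) => (hNle i n).1 hi.le)
  set f : ℕ → ℝ := fun n => ({i | N i = n}.ncard : ℝ) with hf
  have hf0 : f 0 = 0 := by
    have : {i | N i = 0} = ∅ := by
      ext i; simp; have := hN1 i; omega
    simp [hf, this]
  have hfn : ∀ n, 0 ≤ f n := fun n => by positivity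
  have hsum : ∀ n : ℕ, ∑ k ∈ Finset.Icc 1 n, f k = ({i | x i ≤ n}.ncard : ℝ) := by
    intro n
    simp only [hf]
    norm_cast
    rw [Set.ncard_eq_toFinset_card _ (hfin n),
      Finset.card_eq_sum_card_fiberwise (f := N) (t := Finset.Icc 1 n)]
    · refine Finset.sum_congr rfl fun k hk => ?_
      rw [Set.ncard_eq_toFinset_card _ (hff k)]
      congr 1
      ext i
      simp only [Set.Finite.mem_toFinset, Set.mem_ofPred_eq, Finset.mem_filter]
      rw [← hNle]
      have := (Finset.mem_Icc.1 hk).2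
      constructor
      · intro h; exact ⟨h.le.trans this, h⟩
      · exact fun h => h.2
    · intro i hi
      simp only [Set.Finite.coe_toFinset, Set.mem_ofPred_eq] at hi
      simp only [Finset.coe_Icc, Set.mem_Icc]
      exact ⟨hN1 i, (hNle i n).2 hi⟩
  have hlim' : Tendsto (fun n : ℕ => (∑ k ∈ Finset.Icc 1 n, f k) / (n : ℝ)) atTop (nhds l) := by
    simpa only [hsum] using hlim
  have hLS : ∀ s : ℝ, 1 < s → LSeriesSummable (fun n ↦ (f n : ℂ)) s := fun s hs => by
    refine LSeriesSummable_of_sum_norm_bigO_and_nonneg ?_ hfn zero_le_one (by simpa using hs)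
    exact Asymptotics.isBigO_atTop_natCast_rpow_of_tendsto_div_rpow (by simpa using hlim')
  have hterm : ∀ s : ℝ, LSeries.term (fun n ↦ (f n : ℂ)) s =
      fun n => ((f n * (n : ℝ) ^ (-s) : ℝ) : ℂ) := by
    intro s
    ext n
    rw [LSeries.term_def₀ (by simp [hf0])]
    push_cast
    rw [Complex.ofReal_cpow (by positivity)]
    simp
  have hrs : ∀ s : ℝ, 1 < s → Summable (fun n : ℕ => f n * (n : ℝ) ^ (-s)) := fun s hs => by
    have := hLS s hs
    rw [LSeriesSummable, hterm] at this
    exact_mod_cast this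
  have hfib : ∀ (s : ℝ) (n : ℕ), (∑' y : {i // N i = n}, ((N y.1 : ℕ) : ℝ) ^ (-s)) =
      f n * (n : ℝ) ^ (-s) := by
    intro s n
    have : (fun y : {i // N i = n} => ((N y.1 : ℕ) : ℝ) ^ (-s)) = fun _ => (n : ℝ) ^ (-s) := by
      ext y; rw [y.2]
    rw [this, tsum_const, nsmul_eq_mul]
    rfl
  have hsig : ∀ s : ℝ, 1 < s → Summable (fun p : (Σ n, {i // N i = n}) =>
      ((N p.2.1 : ℕ) : ℝ) ^ (-s)) := fun s hs => by
    rw [summable_sigma_of_nonneg (fun _ => by positivity)]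
    refine ⟨fun n => ?_, ?_⟩
    · have : Finite {i // N i = n} := hff n
      exact Summable.of_finite
    · simpa only [hfib] using hrs s hs
  have hNs : ∀ s : ℝ, 1 < s → Summable (fun i => ((N i : ℕ) : ℝ) ^ (-s)) := fun s hs =>
    (Equiv.sigmaFiberEquiv N).summable_iff.1 (hsig s hs)
  have hNt : ∀ s : ℝ, 1 < s → LSeries (fun n ↦ (f n : ℂ)) s =
      ((∑' i, ((N i : ℕ) : ℝ) ^ (-s) : ℝ) : ℂ) := fun s hs => by
    rw [LSeries, hterm, ← Complex.ofReal_tsum, ← (Equiv.sigmaFiberEquiv N).tsum_eq]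
    congr 1
    have := (hsig s hs).tsum_sigma
    simp only [hfib] at this
    exact this.symm
  have hmain : Tendsto (fun s : ℝ => (s - 1) * ∑' i, ((N i : ℕ) : ℝ) ^ (-s))
      (nhdsWithin 1 (Set.Ioi 1)) (nhds l) := by
    have := LSeries_tendsto_sub_mul_nhds_one_of_tendsto_sum_div_and_nonneg f hlim' hfn
    have h2 := (Complex.continuous_re.tendsto _).comp this
    simp only [Complex.ofReal_re] at h2
    refine h2.congr' ?_
    filter_upwards [self_mem_nhdsWithin] with s hs
    simp only [Function.comp]
    rw [hNt s hs]
    norm_cast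
  -- comparison
  have hx0 : ∀ i, 0 < x i := fun i => by linarith [hx i]
  have hx2 : Summable (fun i => 2 * x i ^ (-2 : ℝ)) := by
    refine Summable.mul_left _ ?_
    refine Summable.of_nonneg_of_le (fun i => (Real.rpow_pos_of_pos (hx0 i) _).le) (fun i => ?_)
      ((hNs 2 (by norm_num)).mul_left 4)
    have h2 : (N i : ℝ) < x i + 1 := Nat.ceil_lt_add_one (hx0 i).le
    have h3 : 0 < (N i : ℝ) := by exact_mod_cast hN1 i
    have h4 := hx i
    have h5 := hx0 i
    rw [Real.rpow_neg h5.le, Real.rpow_neg h3.le, ← div_eq_mul_inv, Real.rpow_two, Real.rpow_two,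
      inv_eq_one_div, div_le_div_iff₀ (by positivity) (by positivity)]
    nlinarith
  have hd : ∀ s : ℝ, 1 < s → s < 2 →
      Summable (fun i => x i ^ (-s) - ((N i : ℕ) : ℝ) ^ (-s)) := fun s h1 h2 =>
    Summable.of_norm_bounded hx2 (fun i => by
      rw [Real.norm_eq_abs]; exact aux_real (hx i) h1 h2)
  have hev : ∀ᶠ s : ℝ in nhdsWithin 1 (Set.Ioi 1), 1 < s ∧ s < 2 := by
    filter_upwards [Ioo_mem_nhdsGT (show (1 : ℝ) < 2 by norm_num)] with s hs using hs
  have hdt : Tendsto (fun s : ℝ => (s - 1) * ∑' i, (x i ^ (-s) - ((N i : ℕ) : ℝ) ^ (-s)))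
      (nhdsWithin 1 (Set.Ioi 1)) (nhds 0) := by
    have hg : Tendsto (fun s : ℝ => (s - 1) * ∑' i, 2 * x i ^ (-2 : ℝ))
        (nhdsWithin 1 (Set.Ioi 1)) (nhds 0) := by
      have : Tendsto (fun s : ℝ => (s - 1) * ∑' i, 2 * x i ^ (-2 : ℝ))
        (nhds 1) (nhds ((1 - 1) * ∑' i, 2 * x i ^ (-2 : ℝ))) :=
        Continuous.tendsto (by fun_prop) _
      rw [sub_self, zero_mul] at this
      exact this.mono_left nhdsWithin_le_nhds
    refine squeeze_zero_norm' ?_ hg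
    filter_upwards [hev] with s hs
    rw [norm_mul, Real.norm_of_nonneg (by linarith [hs.1] : 0 ≤ s - 1)]
    refine mul_le_mul_of_nonneg_left ?_ (by linarith [hs.1])
    exact tsum_of_norm_bounded hx2.hasSum (fun i => by
      rw [Real.norm_eq_abs]; exact aux_real (hx i) hs.1 hs.2)
  have := hdt.add hmain
  rw [zero_add] at this
  refine this.congr' ?_
  filter_upwards [hev] with s hs
  rw [← mul_add, ← (hd s hs.1 hs.2).tsum_add (hNs s hs.1)]
  simp
end aux

section count
open MeasureTheory Pointwise

lemma ball_vol (k : ℕ) (hk : 1 ≤ k) :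
    volume.real {x : Fin k → ℝ | ∑ i, x i ^ 2 ≤ 1} =
      Real.pi ^ ((k : ℝ) / 2) / Real.Gamma ((k : ℝ) / 2 + 1) := by
  have : Nonempty (Fin k) := ⟨⟨0, hk⟩⟩
  have h := volume_sum_rpow_le (Fin k) (p := 2) (by norm_num) 1
  have e : {x : Fin k → ℝ | (∑ i, |x i| ^ (2 : ℝ)) ^ (1 / (2 : ℝ)) ≤ 1} =
      {x : Fin k → ℝ | ∑ i, x i ^ 2 ≤ 1} := by
    ext x
    simp only [Set.mem_ofPred_eq, Real.rpow_two, sq_abs, ← Real.sqrt_eq_rpow]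
    rw [Real.sqrt_le_iff, one_pow, and_iff_right zero_le_one]
  rw [e] at h
  rw [Measure.real, h]
  have hG : 2 * Real.Gamma (1 / 2 + 1) = Real.pi ^ (1 / 2 : ℝ) := by
    rw [Real.Gamma_add_one (by norm_num), Real.Gamma_one_half_eq, Real.sqrt_eq_rpow]; ring
  rw [hG, Fintype.card_fin, ← Real.rpow_natCast, ← Real.rpow_mul Real.pi_pos.le]
  have hp : 0 < Real.Gamma ((k : ℝ) / 2 + 1) := Real.Gamma_pos_of_pos (by positivity)
  simp only [ENNReal.ofReal_one, one_pow, one_mul]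
  rw [ENNReal.toReal_ofReal (div_nonneg (Real.rpow_nonneg Real.pi_pos.le _) hp.le)]
  congr 2; ring

lemma count_R (k : ℕ) (hk : 1 ≤ k) :
    Tendsto (fun R : ℝ => ({m : Fin k → ℤ | ∑ i, (m i : ℝ) ^ 2 ≤ R ^ 2}.ncard : ℝ) / R ^ k) atTop
      (nhds (Real.pi ^ ((k : ℝ) / 2) / Real.Gamma ((k : ℝ) / 2 + 1))) := by
  rw [← ball_vol k hk]
  set s := {x : Fin k → ℝ | ∑ i, x i ^ 2 ≤ 1} with hs
  have hsc : Convex ℝ s := by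
    have : s = (WithLp.linearEquiv 2 ℝ (Fin k → ℝ)).symm ⁻¹'
        (Metric.closedBall (0 : EuclideanSpace ℝ (Fin k)) 1) := by
      ext x
      simp [hs, EuclideanSpace.norm_eq]
    rw [this]
    exact (convex_closedBall _ _).linear_preimage
      (WithLp.linearEquiv 2 ℝ (Fin k → ℝ)).symm.toLinearMap
  have hcl : IsClosed s := isClosed_le (by fun_prop) (by fun_prop)
  have hbd : Bornology.IsBounded s := by
    refine (Metric.isBounded_closedBall (x := (0 : Fin k → ℝ)) (r := 1)).subset fun x hx => ?_
    rw [mem_closedBall_zero_iff, pi_norm_le_iff_of_nonneg zero_le_one]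
    intro i
    rw [Real.norm_eq_abs, ← sq_le_one_iff_abs_le_one]
    exact (Finset.single_le_sum (f := fun i => x i ^ 2) (fun i _ => sq_nonneg _)
      (Finset.mem_univ i)).trans hx
  have h0 : (0 : Fin k → ℝ) ∈ s := by simp [hs]
  have := tendsto_card_div_pow_atTop_volume' s hbd hcl.measurableSet (hsc.addHaar_frontier volume)
    (fun a b ha hab => by
      rintro _ ⟨y, hy, rfl⟩
      have hb : 0 < b := ha.trans_le hab
      refine ⟨(a / b) • y, ?_, ?_⟩
      · exact hsc.smul_mem_of_zero_mem h0 hy ⟨by positivity, (div_le_one hb).2 hab⟩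
      · simp only [smul_smul]; congr 1; field_simp)
  refine this.congr' ?_
  filter_upwards [eventually_gt_atTop 0] with R hR
  rw [Fintype.card_fin]
  congr 2
  rw [Nat.card_coe_set_eq]
  have himg : (s ∩ R⁻¹ • (Submodule.span ℤ (Set.range (Pi.basisFun ℝ (Fin k))) : Set (Fin k → ℝ))) =
      (fun m : Fin k → ℤ => (R⁻¹ • (fun i => (m i : ℝ)) : Fin k → ℝ)) ''
        {m : Fin k → ℤ | ∑ i, (m i : ℝ) ^ 2 ≤ R ^ 2} := by
    have key : ∀ m : Fin k → ℤ, (R⁻¹ • (fun i => (m i : ℝ)) : Fin k → ℝ) ∈ s ↔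
        ∑ i, (m i : ℝ) ^ 2 ≤ R ^ 2 := by
      intro m
      simp only [hs, Set.mem_ofPred_eq, Pi.smul_apply, smul_eq_mul, mul_pow, ← Finset.mul_sum]
      rw [inv_pow, inv_mul_le_iff₀ (by positivity), mul_one]
    ext v
    constructor
    · rintro ⟨hv, w, hw, rfl⟩
      have hw' := (Module.Basis.mem_span_iff_repr_mem ℤ _ _).1 hw
      choose m hm using hw'
      have : w = fun i => (m i : ℝ) := by
        ext i; have := hm i; simpa using this.symm
      subst this
      exact ⟨m, (key m).1 hv, rfl⟩
    · rintro ⟨m, hm, rfl⟩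
      refine ⟨(key m).2 hm, Set.smul_mem_smul_set ?_⟩
      refine (Module.Basis.mem_span_iff_repr_mem ℤ _ _).2 fun i => ⟨m i, by simp⟩
  have hinj : Function.Injective
      (fun m : Fin k → ℤ => (R⁻¹ • (fun i => (m i : ℝ)) : Fin k → ℝ)) := by
    intro m m' h
    have h2 := smul_right_injective (Fin k → ℝ) (inv_ne_zero hR.ne') h
    ext i
    exact_mod_cast congrFun h2 i
  rw [← Set.ncard_image_of_injective _ hinj, ← himg]

lemma le_iff (k : ℕ) (hk : 1 ≤ k) {A t : ℝ} (hA : 0 ≤ A) (ht : 1 ≤ t) :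
    (1 + A) ^ ((k : ℝ) / 2) ≤ t ↔ A ≤ (Real.sqrt (t ^ (2 / (k : ℝ)) - 1)) ^ 2 := by
  have hk0 : (0 : ℝ) < k := by exact_mod_cast hk
  have h1 : 1 ≤ t ^ (2 / (k : ℝ)) := Real.one_le_rpow ht (by positivity)
  rw [Real.sq_sqrt (by linarith), le_sub_iff_add_le', ← Real.rpow_inv_le_iff_of_pos (by positivity) (by positivity) (by positivity)]
  rw [inv_div]

lemma count_n (k : ℕ) (hk : 1 ≤ k) :
    Tendsto (fun n : ℕ => ({m : Fin k → ℤ | (1 + ∑ i, (m i : ℝ) ^ 2) ^ ((k : ℝ) / 2) ≤ n}.ncard : ℝ) / n)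
      atTop (nhds (Real.pi ^ ((k : ℝ) / 2) / Real.Gamma ((k : ℝ) / 2 + 1))) := by
  have hk0 : (0 : ℝ) < k := by exact_mod_cast hk
  have hu : Tendsto (fun n : ℕ => (n : ℝ) ^ (2 / (k : ℝ))) atTop atTop :=
    (tendsto_rpow_atTop (by positivity)).comp tendsto_natCast_atTop_atTop
  have hR : Tendsto (fun n : ℕ => Real.sqrt ((n : ℝ) ^ (2 / (k : ℝ)) - 1)) atTop atTop :=
    Real.tendsto_sqrt_atTop.comp (tendsto_atTop_add_const_right _ (-1) hu)
  have h1 := (count_R k hk).comp hR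
  have h2 : Tendsto (fun n : ℕ => Real.sqrt (1 - ((n : ℝ) ^ (2 / (k : ℝ)))⁻¹) ^ k) atTop (nhds 1) := by
    have : Tendsto (fun n : ℕ => 1 - ((n : ℝ) ^ (2 / (k : ℝ)))⁻¹) atTop (nhds (1 - 0)) :=
      tendsto_const_nhds.sub (tendsto_inv_atTop_zero.comp hu)
    have := ((Real.continuous_sqrt.tendsto _).comp this).pow k
    simpa using this
  have h3 := h1.mul h2
  rw [mul_one] at h3
  refine h3.congr' ?_
  filter_upwards [eventually_ge_atTop 2] with n hn
  have hn1 : (1 : ℝ) < n := by exact_mod_cast hn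
  simp only [Function.comp]
  have hset : {m : Fin k → ℤ | (1 + ∑ i, (m i : ℝ) ^ 2) ^ ((k : ℝ) / 2) ≤ n} =
      {m : Fin k → ℤ | ∑ i, (m i : ℝ) ^ 2 ≤ (Real.sqrt ((n : ℝ) ^ (2 / (k : ℝ)) - 1)) ^ 2} := by
    ext m
    exact le_iff k hk (by positivity) hn1.le
  rw [hset]
  set u := (n : ℝ) ^ (2 / (k : ℝ)) with hudef
  have hu1 : 1 < u := Real.one_lt_rpow hn1 (by positivity)
  have hun : Real.sqrt u ^ k = n := by
    rw [Real.sqrt_eq_rpow, hudef, ← Real.rpow_mul (by positivity), ← Real.rpow_natCast,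
      ← Real.rpow_mul (by positivity)]
    rw [show 2 / (k : ℝ) * (1 / 2) * k = 1 by field_simp, Real.rpow_one]
  have hsq : Real.sqrt (u - 1) = Real.sqrt (1 - u⁻¹) * Real.sqrt u := by
    rw [← Real.sqrt_mul (by rw [sub_nonneg]; exact inv_le_one_of_one_le₀ hu1.le)]
    congr 1; field_simp
  have hne : Real.sqrt (1 - u⁻¹) ≠ 0 := by
    rw [Real.sqrt_ne_zero']; rw [sub_pos]; exact inv_lt_one_of_one_lt₀ hu1
  have hpow : Real.sqrt (u - 1) ^ k = Real.sqrt (1 - u⁻¹) ^ k * n := by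
    rw [hsq, mul_pow, hun]
  have hne2 : Real.sqrt (1 - u⁻¹) ^ k ≠ 0 := pow_ne_zero _ hne
  rw [hpow, div_mul_eq_mul_div, mul_comm _ (n : ℝ), mul_div_mul_right _ _ hne2]

lemma fin_n (k : ℕ) (hk : 1 ≤ k) (n : ℕ) :
    {m : Fin k → ℤ | (1 + ∑ i, (m i : ℝ) ^ 2) ^ ((k : ℝ) / 2) ≤ n}.Finite := by
  refine (Set.finite_Icc (fun _ => -(n : ℤ)) (fun _ => (n : ℤ))).subset fun m hm => ?_
  have hk1 : (1 : ℝ) ≤ k := by exact_mod_cast hk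
  have h0 : 0 ≤ ∑ i, (m i : ℝ) ^ 2 := by positivity
  have key : ∀ i, |m i| ≤ (n : ℤ) := fun i => by
    have h1 : |(m i : ℝ)| ≤ n := by
      calc |(m i : ℝ)| ≤ Real.sqrt (1 + ∑ i, (m i : ℝ) ^ 2) := by
            apply Real.abs_le_sqrt
            have := Finset.single_le_sum (f := fun i => (m i : ℝ) ^ 2) (fun i _ => sq_nonneg _)
              (Finset.mem_univ i)
            linarith
        _ = (1 + ∑ i, (m i : ℝ) ^ 2) ^ (1 / 2 : ℝ) := Real.sqrt_eq_rpow _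
        _ ≤ (1 + ∑ i, (m i : ℝ) ^ 2) ^ ((k : ℝ) / 2) := by
            apply Real.rpow_le_rpow_of_exponent_le <;> linarith
        _ ≤ n := hm
    exact_mod_cast h1
  exact ⟨fun i => (abs_le.1 (key i)).1, fun i => (abs_le.1 (key i)).2⟩
end count

/-- As real `s → k⁺`, the quantity
`(s − k) · Σ_{m ∈ ℤ^k} (1 + ‖m‖²)^(−s/2)` tends to
`k·π^(k/2)/Γ(k/2 + 1) = Vol_{k−1}(S^{k−1})`, the surface volume of the unit
sphere in `ℝ^k`. -/
theorem zeta_residue_at_k (k : ℕ) (hk : 1 ≤ k) :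
    Tendsto
      (fun s : ℝ => (s - k) * ∑' m : Fin k → ℤ,
        (1 + ∑ j, ((m j : ℝ)) ^ 2) ^ (-(s / 2)))
      (nhdsWithin (k : ℝ) (Set.Ioi (k : ℝ)))
      (nhds ((k : ℝ) * Real.pi ^ ((k : ℝ) / 2) / Real.Gamma ((k : ℝ) / 2 + 1))) := by
  have hk0 : (0 : ℝ) < k := by exact_mod_cast hk
  have h := aux_residue (fun m : Fin k → ℤ => (1 + ∑ i, (m i : ℝ) ^ 2) ^ ((k : ℝ) / 2))
    (fun m => Real.one_le_rpow (by
      have : 0 ≤ ∑ i, (m i : ℝ) ^ 2 := by positivity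
      linarith) (by positivity)) (fin_n k hk) (count_n k hk)
  have hg : Tendsto (fun s : ℝ => s / k) (nhdsWithin (k : ℝ) (Set.Ioi (k : ℝ)))
      (nhdsWithin 1 (Set.Ioi 1)) := by
    refine tendsto_nhdsWithin_iff.2 ⟨?_, ?_⟩
    · have : Tendsto (fun s : ℝ => s / k) (nhds (k : ℝ)) (nhds ((k : ℝ) / k)) :=
        Continuous.tendsto (by fun_prop) _
      rw [div_self hk0.ne'] at this
      exact this.mono_left nhdsWithin_le_nhds
    · filter_upwards [self_mem_nhdsWithin] with s hs
      exact (one_lt_div hk0).2 hs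
  have h2 := (h.comp hg).const_mul (k : ℝ)
  rw [mul_div_assoc]
  refine h2.congr fun s => ?_
  simp only [Function.comp]
  rw [← mul_assoc]
  congr 1
  · field_simp
  · refine tsum_congr fun m => ?_
    rw [← Real.rpow_mul (by positivity)]
    congr 1
    field_simp
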